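/- Assume (V; A) satisfies conditions (∗) and (∗∗), and let λ ∈ K. Call a pair (U; C_1, …, C_n), with U a nonzero finite-dimensional K-vector space and C_i ∈ End_K(U), irreducible if the only K-subspaces of U invariant under all C_i are {0} and U. Then (V; A_1, …, A_n) is irreducible if and only if mc_λ(V; A) (equipped with the endomorphisms mc_λ(A)_1, …, mc_λ(A)_n) is irreducible. -/

import Mathlib

/-! Dettweiler–Reiter convolution and middle convolution, in linear-algebra form.
`V^n` is modelled as `Fin n → V`. -/

/-- The Dettweiler–Reiter convolution endomorphism `c_λ(A)_i` of `V^n`, defined by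
`(c_λ(A)_i w)_i = A_1 w_1 + ⋯ + A_n w_n + λ w_i` and `(c_λ(A)_i w)_k = 0` for `k ≠ i`. -/
noncomputable def cDR {K : Type*} [Field K] {V : Type*} [AddCommGroup V] [Module K V]
    {n : ℕ} (lam : K) (A : Fin n → Module.End K V) (i : Fin n) :
    Module.End K (Fin n → V) :=
  (LinearMap.single K (fun _ : Fin n => V) i).comp
    ((∑ j, (A j).comp (LinearMap.proj j)) + lam • LinearMap.proj i)

/-- The subspace `𝔨 = {w ∈ V^n : A_i w_i = 0 for all i}`. -/
def kSub {K : Type*} [Field K] {V : Type*} [AddCommGroup V] [Module K V]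
    {n : ℕ} (A : Fin n → Module.End K V) : Submodule K (Fin n → V) :=
  ⨅ i, LinearMap.ker ((A i).comp (LinearMap.proj i))

/-- The subspace `𝔩 = ⋂_{i=1}^n ker c_λ(A)_i`. -/
noncomputable def lSub {K : Type*} [Field K] {V : Type*} [AddCommGroup V] [Module K V]
    {n : ℕ} (lam : K) (A : Fin n → Module.End K V) : Submodule K (Fin n → V) :=
  ⨅ i, LinearMap.ker (cDR lam A i)

/-- The underlying space `V^n/(𝔨 + 𝔩)` of the middle convolution `mc_λ(V; A)`. -/
noncomputable abbrev mcSpace {K : Type*} [Field K] {V : Type*} [AddCommGroup V] [Module K V]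
    {n : ℕ} (lam : K) (A : Fin n → Module.End K V) :=
  (Fin n → V) ⧸ (kSub A ⊔ lSub lam A)

/-- `e` is the endomorphism `mc_λ(A)_i` of `V^n/(𝔨 + 𝔩)` induced by `c_λ(A)_i`,
characterised by `e ∘ mkQ = mkQ ∘ c_λ(A)_i`. -/
noncomputable def IsInducedEnd {K : Type*} [Field K] {V : Type*} [AddCommGroup V] [Module K V]
    {n : ℕ} (lam : K) (A : Fin n → Module.End K V) (i : Fin n)
    (e : Module.End K (mcSpace lam A)) : Prop :=
  e.comp (kSub A ⊔ lSub lam A).mkQ = (kSub A ⊔ lSub lam A).mkQ.comp (cDR lam A i)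
/-- Condition (∗): for every `i` and `τ ∈ K`,
`ker(A_i − τ·id_V) ∩ ⋂_{j ≠ i} ker A_j = {0}`. -/
def StarKer {K : Type*} [Field K] {V : Type*} [AddCommGroup V] [Module K V]
    {n : ℕ} (A : Fin n → Module.End K V) : Prop :=
  ∀ (i : Fin n) (τ : K),
    LinearMap.ker (A i - τ • (1 : Module.End K V)) ⊓
      (⨅ j, ⨅ _ : j ≠ i, LinearMap.ker (A j)) = ⊥

/-- Condition (∗∗): for every `i` and `τ ∈ K`,
`range(A_i − τ·id_V) + Σ_{j ≠ i} range A_j = V`. -/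
def StarIm {K : Type*} [Field K] {V : Type*} [AddCommGroup V] [Module K V]
    {n : ℕ} (A : Fin n → Module.End K V) : Prop :=
  ∀ (i : Fin n) (τ : K),
    LinearMap.range (A i - τ • (1 : Module.End K V)) ⊔
      (⨆ j, ⨆ _ : j ≠ i, LinearMap.range (A j)) = ⊤
/-- A tuple `(U; C_1, …, C_n)` is irreducible if `U ≠ 0` and the only subspaces of `U`
invariant under all `C_i` are `{0}` and `U`. -/
def IrredTuple {K : Type*} [Field K] {U : Type*} [AddCommGroup U] [Module K U]
    {n : ℕ} (C : Fin n → Module.End K U) : Prop :=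
  Nontrivial U ∧
    ∀ W : Submodule K U, (∀ i, Submodule.map (C i) W ≤ W) → W = ⊥ ∨ W = ⊤

section Helpers

variable {K : Type*} [Field K] {V : Type*} [AddCommGroup V] [Module K V] {n : ℕ}

lemma cDR_eq (lam : K) (A : Fin n → Module.End K V) (i : Fin n) (w : Fin n → V) :
    cDR lam A i w = Pi.single i ((∑ j, A j (w j)) + lam • w i) := by
  simp [cDR]

lemma mem_kSub_iff (A : Fin n → Module.End K V) (w : Fin n → V) :
    w ∈ kSub A ↔ ∀ i, A i (w i) = 0 := by
  simp [kSub, Submodule.mem_iInf]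

lemma mem_lSub_iff (lam : K) (A : Fin n → Module.End K V) (w : Fin n → V) :
    w ∈ lSub lam A ↔ ∀ i, (∑ j, A j (w j)) + lam • w i = 0 := by
  simp [lSub, Submodule.mem_iInf, cDR_eq]

lemma sum_single (A : Fin n → Module.End K V) (i : Fin n) (v : V) :
    ∑ j, A j ((Pi.single i v : Fin n → V) j) = A i v := by
  rw [Finset.sum_eq_single i]
  · simp
  · intro j _ hj
    simp [Pi.single_eq_of_ne hj]
  · simp

lemma star_ker_elim {A : Fin n → Module.End K V} (h : StarKer A) (i : Fin n) (τ : K) (v : V)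
    (h1 : A i v = τ • v) (h2 : ∀ j, j ≠ i → A j v = 0) : v = 0 := by
  have : v ∈ LinearMap.ker (A i - τ • (1 : Module.End K V)) ⊓
      (⨅ j, ⨅ _ : j ≠ i, LinearMap.ker (A j)) := by
    simp only [Submodule.mem_inf, Submodule.mem_iInf, LinearMap.mem_ker]
    refine ⟨?_, h2⟩
    simp [h1]
  rw [h i τ] at this
  simpa using this

lemma star_im_elim {A : Fin n → Module.End K V} (h : StarIm A) (i : Fin n) (τ : K)
    (P : Submodule K V)
    (h1 : ∀ v, A i v - τ • v ∈ P) (h2 : ∀ j, j ≠ i → ∀ v, A j v ∈ P) : P = ⊤ := by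
  rw [eq_top_iff, ← h i τ]
  refine sup_le ?_ (iSup_le fun j => iSup_le fun hj => ?_)
  · rintro _ ⟨v, rfl⟩
    simpa using h1 v
  · rintro _ ⟨v, rfl⟩
    exact h2 j hj v

/-- `A_i c_i` vanishes on `𝔨 + 𝔩`. -/
lemma kl_vanish (lam : K) (A : Fin n → Module.End K V) (w : Fin n → V)
    (hw : w ∈ kSub A ⊔ lSub lam A) (i : Fin n) :
    A i ((∑ j, A j (w j)) + lam • w i) = 0 := by
  obtain ⟨x, hx, y, hy, rfl⟩ := Submodule.mem_sup.1 hw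
  rw [mem_kSub_iff] at hx
  rw [mem_lSub_iff] at hy
  have : (∑ j, A j ((x + y) j)) + lam • (x + y) i
      = lam • x i + ((∑ j, A j (y j)) + lam • y i) := by
    simp only [Pi.add_apply, map_add, hx, smul_add, zero_add]
    abel
  rw [this, hy i, add_zero, map_smul, hx, smul_zero]

/-- If `A_i c_i` maps `V^n` into an invariant `U`, then `U = V`. -/
lemma eq_top_of_all {A : Fin n → Module.End K V} (hn : 1 ≤ n) (him : StarIm A) (lam : K)
    (U : Submodule K V)
    (h : ∀ (w : Fin n → V) i, A i ((∑ j, A j (w j)) + lam • w i) ∈ U) : U = ⊤ := by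
  have key : ∀ i v, A i v ∈ U := by
    intro i v
    have : U.comap (A i) = ⊤ := by
      refine star_im_elim him i (-lam) _ ?_ ?_
      · intro v
        have := h (Pi.single i v) i
        rw [sum_single, Pi.single_eq_same] at this
        simpa using this
      · intro j hj v
        have := h (Pi.single j v) i
        rw [sum_single, Pi.single_eq_of_ne hj.symm, smul_zero, add_zero] at this
        exact this
    have hv : v ∈ U.comap (A i) := this ▸ Submodule.mem_top
    exact hv
  exact star_im_elim him ⟨0, hn⟩ 0 U (fun v => by simpa using key _ v) (fun j _ v => key j v)

lemma eq_bot_of_all {A : Fin n → Module.End K V} (hn : 1 ≤ n) (hker : StarKer A) (lam : K)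
    (U : Submodule K V)
    (h : ∀ (w : Fin n → V), (∀ i, w i ∈ U) → ∀ i,
      A i ((∑ j, A j (w j)) + lam • w i) = 0) : U = ⊥ := by
  rw [eq_bot_iff]
  intro u hu
  have hs : ∀ j i, (Pi.single j u : Fin n → V) i ∈ U := by
    intro j i
    by_cases hij : i = j
    · subst hij; simpa using hu
    · simp [Pi.single_eq_of_ne hij]
  have key : ∀ j, A j u = 0 := by
    intro j
    refine star_ker_elim hker j (-lam) _ ?_ ?_
    · have := h _ (hs j) j
      rw [sum_single, Pi.single_eq_same, map_add, map_smul] at this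
      rw [neg_smul]
      exact eq_neg_of_add_eq_zero_left this
    · intro i hi
      have := h _ (hs j) i
      rwa [sum_single, Pi.single_eq_of_ne hi, smul_zero, add_zero] at this
  exact (Submodule.mem_bot K).2
    (star_ker_elim hker ⟨0, hn⟩ 0 u (by simpa using key _) (fun j _ => key j))

lemma invariant_dichotomy {A : Fin n → Module.End K V} (hn : 1 ≤ n) (hker : StarKer A) (lam : K)
    (hA : ∀ W : Submodule K V, (∀ i, Submodule.map (A i) W ≤ W) → W = ⊥ ∨ W = ⊤)
    (W : Submodule K (Fin n → V)) (hW : ∀ i, ∀ w ∈ W, cDR lam A i w ∈ W) :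
    W ≤ kSub A ⊔ lSub lam A ∨ W = ⊤ := by
  have hstep : ∀ i v, (Pi.single i v : Fin n → V) ∈ W →
      ∀ j, (Pi.single j (A i v) : Fin n → V) ∈ W := by
    intro i v hv j
    have := hW j _ hv
    rw [cDR_eq, sum_single] at this
    by_cases hij : j = i
    · subst hij
      rw [Pi.single_eq_same, Pi.single_add, Pi.single_smul] at this
      have h2 := W.sub_mem this (W.smul_mem lam hv)
      simpa using h2
    · rwa [Pi.single_eq_of_ne hij, smul_zero, add_zero] at this
  let U : Submodule K V := ⨅ i, W.comap (LinearMap.single K (fun _ : Fin n => V) i)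
  have hU : ∀ v, v ∈ U ↔ ∀ i, (Pi.single i v : Fin n → V) ∈ W := by
    intro v
    simp [U, Submodule.mem_iInf]
  have hinv : ∀ i, Submodule.map (A i) U ≤ U := by
    rintro i _ ⟨v, hv, rfl⟩
    rw [hU]
    exact hstep i v ((hU v).1 hv i)
  rcases hA U hinv with h | h
  · left
    have hz : ∀ i v, (Pi.single i v : Fin n → V) ∈ W → A i v = 0 := by
      intro i v hv
      have : A i v ∈ U := (hU _).2 (hstep i v hv)
      rw [h] at this
      simpa using this
    intro w hw
    have hw' : ∀ i, A i ((∑ j, A j (w j)) + lam • w i) = 0 := by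
      intro i
      apply hz
      rw [← cDR_eq]
      exact hW i w hw
    by_cases hl : lam = 0
    · subst hl
      apply Submodule.mem_sup_right
      rw [mem_lSub_iff]
      intro i
      simp only [zero_smul, add_zero] at hw' ⊢
      exact star_ker_elim hker ⟨0, hn⟩ 0 _ (by rw [zero_smul]; exact hw' _) (fun j _ => hw' j)
    · set v : V := -(lam⁻¹ • ∑ j, A j (w j)) with hv
      have hk : ∀ i, A i (w i - v) = 0 := by
        intro i
        have : w i - v = lam⁻¹ • ((∑ j, A j (w j)) + lam • w i) := by
          rw [smul_add, smul_smul, inv_mul_cancel₀ hl, one_smul, hv]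
          abel
        rw [this, map_smul, hw', smul_zero]
      have hsum : ∑ j, A j (w j) = ∑ j, A j v := by
        refine Finset.sum_congr rfl fun j _ => ?_
        have := hk j
        rw [map_sub] at this
        exact sub_eq_zero.1 this
      refine Submodule.mem_sup.2 ⟨fun i => w i - v, (mem_kSub_iff _ _).2 hk, fun _ => v,
        (mem_lSub_iff _ _ _).2 ?_, ?_⟩
      · intro i
        rw [← hsum, hv, smul_neg, smul_smul, mul_inv_cancel₀ hl, one_smul, add_neg_cancel]
      · funext i
        simp
  · right
    rw [eq_top_iff]
    intro w _
    have : w = ∑ i, (Pi.single i (w i) : Fin n → V) := (Finset.univ_sum_single w).symm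
    rw [this]
    refine W.sum_mem fun i _ => ?_
    exact (hU (w i)).1 (h ▸ Submodule.mem_top) i

end Helpers

/-- Assume `(V; A)` satisfies (∗) and (∗∗), and let `λ ∈ K`.
Then `(V; A)` is irreducible if and only if `mc_λ(V; A)` (with the induced
endomorphisms `mc_λ(A)_i`) is irreducible. -/
theorem mc_preserves_irreducibility
    {K : Type*} [Field K] {V : Type*} [AddCommGroup V] [Module K V] [FiniteDimensional K V]
    {n : ℕ} (hn : 1 ≤ n) (A : Fin n → Module.End K V)
    (hker : StarKer A) (him : StarIm A) (lam : K)
    (B : Fin n → Module.End K (mcSpace lam A))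
    (hB : ∀ i, IsInducedEnd lam A i (B i)) :
    IrredTuple A ↔ IrredTuple B := by
  have hB' : ∀ i w, B i ((kSub A ⊔ lSub lam A).mkQ w)
      = (kSub A ⊔ lSub lam A).mkQ (cDR lam A i w) := fun i w => LinearMap.congr_fun (hB i) w
  constructor
  · rintro ⟨hnt, hA⟩
    refine ⟨?_, ?_⟩
    · rw [Submodule.Quotient.nontrivial_iff]
      intro htop
      have : (⊥ : Submodule K V) = ⊤ := by
        refine eq_top_of_all hn him lam ⊥ fun w i => ?_
        rw [Submodule.mem_bot]
        exact kl_vanish lam A w (htop ▸ Submodule.mem_top) i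
      exact bot_ne_top this
    · intro W hW
      have hWc : ∀ i, ∀ w ∈ W.comap (kSub A ⊔ lSub lam A).mkQ,
          cDR lam A i w ∈ W.comap (kSub A ⊔ lSub lam A).mkQ := by
        intro i w hw
        rw [Submodule.mem_comap, ← hB']
        exact hW i (Submodule.mem_map_of_mem hw)
      rcases invariant_dichotomy hn hker lam hA (W.comap (kSub A ⊔ lSub lam A).mkQ) hWc with h | h
      · left
        rw [eq_bot_iff]
        intro x hx
        obtain ⟨w, rfl⟩ := Submodule.mkQ_surjective _ x
        have := h (show w ∈ W.comap (kSub A ⊔ lSub lam A).mkQ from hx)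
        rw [Submodule.mem_bot]
        simpa using this
      · right
        rw [eq_top_iff]
        intro x _
        obtain ⟨w, rfl⟩ := Submodule.mkQ_surjective _ x
        have : w ∈ W.comap (kSub A ⊔ lSub lam A).mkQ := h ▸ Submodule.mem_top
        exact this
  · rintro ⟨hnt, hI⟩
    refine ⟨?_, ?_⟩
    · by_contra hV
      rw [not_nontrivial_iff_subsingleton] at hV
      rw [Submodule.Quotient.nontrivial_iff] at hnt
      exact hnt (Subsingleton.elim _ _)
    · intro U hU
      have hU' : ∀ i, ∀ u ∈ U, A i u ∈ U := fun i u hu => hU i (Submodule.mem_map_of_mem hu)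
      have hT : ∀ w : Fin n → V, (∀ i, w i ∈ U) → ∀ i, (∑ j, A j (w j)) + lam • w i ∈ U :=
        fun w hw i => U.add_mem (U.sum_mem fun j _ => hU' j _ (hw j)) (U.smul_mem _ (hw i))
      have hUc : ∀ i, Submodule.map (B i)
          ((Submodule.pi Set.univ fun _ => U).map (kSub A ⊔ lSub lam A).mkQ) ≤
          (Submodule.pi Set.univ fun _ => U).map (kSub A ⊔ lSub lam A).mkQ := by
        rintro i _ ⟨_, ⟨u, hu, rfl⟩, rfl⟩
        have hu' : ∀ i, u i ∈ U := fun i => hu i trivial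
        rw [hB']
        refine Submodule.mem_map_of_mem ?_
        rw [cDR_eq]
        intro k _
        by_cases hk : k = i
        · subst hk
          simpa using hT u hu' k
        · simp [Pi.single_eq_of_ne hk]
      rcases hI ((Submodule.pi Set.univ fun _ => U).map (kSub A ⊔ lSub lam A).mkQ) hUc with h | h
      · left
        refine eq_bot_of_all hn hker lam U fun w hw i => kl_vanish lam A w ?_ i
        have : (kSub A ⊔ lSub lam A).mkQ w ∈
            (Submodule.pi Set.univ fun _ => U).map (kSub A ⊔ lSub lam A).mkQ :=
          Submodule.mem_map_of_mem (fun i _ => hw i)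
        rw [h, Submodule.mem_bot] at this
        simpa using this
      · right
        refine eq_top_of_all hn him lam U fun w i => ?_
        have : (kSub A ⊔ lSub lam A).mkQ w ∈
            (Submodule.pi Set.univ fun _ => U).map (kSub A ⊔ lSub lam A).mkQ :=
          h ▸ Submodule.mem_top
        obtain ⟨u, hu, huw⟩ := this
        have hu' : ∀ i, u i ∈ U := fun i => hu i trivial
        have hd : w - u ∈ kSub A ⊔ lSub lam A := by
          rw [← Submodule.ker_mkQ (kSub A ⊔ lSub lam A), LinearMap.mem_ker, map_sub, huw, sub_self]
        have hz := kl_vanish lam A _ hd i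
        have he : (∑ j, A j ((w - u) j)) + lam • (w - u) i
            = ((∑ j, A j (w j)) + lam • w i) - ((∑ j, A j (u j)) + lam • u i) := by
          simp only [Pi.sub_apply, map_sub, Finset.sum_sub_distrib, smul_sub]
          abel
        rw [he, map_sub, sub_eq_zero] at hz
        rw [hz]
        exact hU' i _ (hT u hu' i)
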